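/- Lemma on a-left representations in the hexagonal Coxeter group: let g, g' ∈ G with a-left representations w = u₁a₁…u_p a_p u_{p+1}a_{p+1}…u_{p+m}a_{p+m}u_{p+m+1} and w' = u₁a₁…u_p a_p u'_{p+1}a'_{p+1}…u'_{p+n}a'_{p+n}u'_{p+n+1} where u_{p+1}a_{p+1} ≠ u'_{p+1}a'_{p+1}. Then the A-letters a_{p+1},…,a_{p+m}, a'_{p+1},…,a'_{p+n} are exactly the A-letters that survive when the word w⁻¹w' is fully reduced (i.e., the number of A-letters in any geodesic representative of g⁻¹g' is m + n). -/

import Mathlib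

/-- Generators of the hexagonal hyperbolic Coxeter group: (false, i) is aᵢ₊₁ and
(true, i) is bᵢ₊₁. -/
abbrev HexGen : Type := Bool × Fin 3

/-- Relators: each generator squares to the identity, and a_k commutes with b_l for k ≠ l. -/
def hexRels : Set (FreeGroup HexGen) :=
  {r | (∃ x : HexGen, r = FreeGroup.of x * FreeGroup.of x) ∨
       (∃ k l : Fin 3, k ≠ l ∧
          r = FreeGroup.of (false, k) * FreeGroup.of (true, l) *
              (FreeGroup.of (false, k))⁻¹ * (FreeGroup.of (true, l))⁻¹)}

/-- The hexagonal hyperbolic Coxeter group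
G = ⟨a₁,a₂,a₃,b₁,b₂,b₃ | aᵢ² = bᵢ² = e, [a_k,b_l] = e for k ≠ l⟩. -/
abbrev Hex : Type := PresentedGroup hexRels

/-- Evaluation of a word in the generators in the group. -/
def evalWord (w : List HexGen) : Hex :=
  (w.map (fun x => (PresentedGroup.of x : Hex))).prod

/-- Word metric on Hex with respect to the generating set S = {a₁,a₂,a₃,b₁,b₂,b₃}
(each generator is its own inverse). -/
noncomputable def wordDist (g h : Hex) : ℕ :=
  sInf {n : ℕ | ∃ w : List HexGen, w.length = n ∧ evalWord w = g⁻¹ * h}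

/-- w is a geodesic word representing g. -/
def IsGeodesicWord (g : Hex) (w : List HexGen) : Prop :=
  evalWord w = g ∧ ∀ w' : List HexGen, evalWord w' = g → w.length ≤ w'.length

/-- All A-letters are commuted as far left as possible: no adjacent pair b_l a_k with
k ≠ l occurs. -/
def IsALeft (w : List HexGen) : Prop :=
  ∀ (s : ℕ) (k l : Fin 3), k ≠ l →
    ¬(w[s]? = some (true, l) ∧ w[s + 1]? = some (false, k))

/-- All B-letters are commuted as far left as possible. -/
def IsBLeft (w : List HexGen) : Prop :=
  ∀ (s : ℕ) (k l : Fin 3), k ≠ l →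
    ¬(w[s]? = some (false, k) ∧ w[s + 1]? = some (true, l))

/-- Cut a word into blocks, each ending with a letter of type p (p = false : after each
A-letter; p = true : after each B-letter); a trailing block with no such letter is
discarded. -/
def cutAux (p : Bool) : List HexGen → List HexGen → List (List HexGen)
  | _, [] => []
  | cur, x :: xs =>
      if x.1 = p then (cur ++ [x]) :: cutAux p [] xs else cutAux p (cur ++ [x]) xs

/-- Length of the longest common prefix of two lists. -/
def lcpLen {A : Type*} [DecidableEq A] : List A → List A → ℕ
  | a :: as, b :: bs => if a = b then lcpLen as bs + 1 else 0
  | _, _ => 0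

/-- The rooted-tree (sentence-tree) metric on finite sequences. -/
def treeDist {A : Type*} [DecidableEq A] (u v : List A) : ℕ :=
  u.length + v.length - 2 * lcpLen u v

/-!
Call a word normal if no letter equals its successor and no A-letter commutes past its successor;
the reversals of a-left geodesics are normal. Multiplying a normal word on the left by a generator,
by sliding the letter right as far as possible and then cancelling or inserting it, is an action of
the group. Hence each element has only one normal form, and as a reduction only permutes and deletes
letters, a geodesic is, up to order, contained in every word with the same value. In particular it
has the fewest A-letters.

This bounds the number of A-letters from both sides. Cancelling the common blocks of `wa` and `wa'`
in `wa⁻¹ wa'` leaves a word for `g⁻¹ g'` with `treeDist` many A-letters. Conversely, multiplying by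
the letters of `v` one at a time carries the sequence of blocks of `g'` to that of `g`; a B-letter
fixes this sequence and an A-letter moves it along one edge of the tree, so at least `treeDist`
A-letters are needed.
-/

section Reduction

variable {α : Type*} {R : α → α → Prop}

/-- Words in which no letter `x` can be cancelled against the next letter `y` or, by `R x y`, be
moved past it. -/
abbrev IsNormal (R : α → α → Prop) (s : List α) : Prop :=
  s.IsChain fun x y => x ≠ y ∧ ¬ R x y

theorem not_rel_self (hR : ∀ x y z, R x y → ¬ R y z) (x : α) : ¬ R x x :=
  fun h => hR x x x h h

theorem isNormal_append_iff (hR : ∀ x y z, R x y → ¬ R y z) {x : α} {c t : List α}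
    (hc : ∀ y ∈ c, R x y) (ht : ∀ z ∈ t.head?, ¬ R x z) :
    IsNormal R (c ++ t) ↔ IsNormal R c ∧ IsNormal R t := by
  rw [IsNormal, List.isChain_append, ← and_assoc, and_iff_left_iff_imp]
  intro _ y hy z hz
  have hxy : R x y := hc y (List.mem_of_getLast? hy)
  exact ⟨fun h => ht z hz (h ▸ hxy), hR x y z hxy⟩

theorem IsNormal.exists_eq_append {s : List α} (hs : IsNormal R s) (x : α) :
    ∃ c t, (∀ y ∈ c, R x y) ∧ IsNormal R (x :: t) ∧ (s = c ++ t ∨ s = c ++ x :: t) := by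
  induction s with
  | nil => exact ⟨[], [], by simp, by simp, Or.inl rfl⟩
  | cons y s ih =>
    by_cases hxy : x = y
    · exact ⟨[], s, by simp, hxy ▸ hs, Or.inr (by simp [hxy])⟩
    by_cases hr : R x y
    · obtain ⟨c, t, hc, ht, hst⟩ := ih hs.tail
      exact ⟨y :: c, t, List.forall_mem_cons.2 ⟨hr, hc⟩, ht, by simpa using hst⟩
    · exact ⟨[], y :: s, by simp, List.isChain_cons_cons.2 ⟨⟨hxy, hr⟩, hs⟩, Or.inl rfl⟩

variable [DecidableEq α] [DecidableRel R]

/-- Left multiplication of a word by the letter `x`, followed by a reduction: `x` slides right past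
each letter `y` with `R x y` and, at the first other letter, is cancelled or inserted. This is meant
for involutive letters such that `x` and `y` commute whenever `R x y`. -/
def reduceCons (R : α → α → Prop) [DecidableRel R] (x : α) : List α → List α
  | [] => [x]
  | y :: s => if x = y then s else if R x y then y :: reduceCons R x s else x :: y :: s

theorem reduceCons_cons_self (x : α) (s : List α) : reduceCons R x (x :: s) = s := by
  simp [reduceCons]

theorem reduceCons_cons_of_rel {x y : α} (hx : ¬ R x x) (h : R x y) (s : List α) :
    reduceCons R x (y :: s) = y :: reduceCons R x s := by
  have hne : x ≠ y := fun he => hx (he ▸ h)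
  simp [reduceCons, hne, h]

theorem reduceCons_append_of_forall_rel {x : α} {c : List α} (hx : ¬ R x x)
    (hc : ∀ y ∈ c, R x y) (t : List α) : reduceCons R x (c ++ t) = c ++ reduceCons R x t := by
  induction c with
  | nil => rfl
  | cons y c ih =>
    rw [List.forall_mem_cons] at hc
    rw [List.cons_append, reduceCons_cons_of_rel hx hc.1, ih hc.2, List.cons_append]

theorem reduceCons_of_isNormal {x : α} {s : List α} (h : IsNormal R (x :: s)) :
    reduceCons R x s = x :: s := by
  cases s with
  | nil => rfl
  | cons y s =>
    have hxy := (List.isChain_cons_cons.1 h).1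
    simp [reduceCons, hxy.1, hxy.2]

theorem IsNormal.reduceCons_reduceCons {s : List α} (hs : IsNormal R s) {x : α}
    (hx : ¬ R x x) : reduceCons R x (reduceCons R x s) = s := by
  obtain ⟨c, t, hc, ht, rfl | rfl⟩ := hs.exists_eq_append x <;>
    simp only [reduceCons_append_of_forall_rel hx hc, reduceCons_of_isNormal ht,
      reduceCons_cons_self]

theorem isNormal_reduceCons (hR : ∀ x y z, R x y → ¬ R y z) {s : List α}
    (hs : IsNormal R s) (x : α) : IsNormal R (reduceCons R x s) := by
  have hx : ¬ R x x := not_rel_self hR x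
  obtain ⟨c, t, hc, ht, hst⟩ := hs.exists_eq_append x
  have insert_iff : IsNormal R (c ++ x :: t) ↔ IsNormal R c ∧ IsNormal R (x :: t) :=
    isNormal_append_iff hR hc (by simpa using hx)
  have cancel_iff : IsNormal R (c ++ t) ↔ IsNormal R c ∧ IsNormal R t :=
    isNormal_append_iff hR hc fun z hz => ((List.isChain_cons.1 ht).1 z hz).2
  rcases hst with rfl | rfl
  · rw [reduceCons_append_of_forall_rel hx hc, reduceCons_of_isNormal ht]
    exact insert_iff.2 ⟨(cancel_iff.1 hs).1, ht⟩
  · rw [reduceCons_append_of_forall_rel hx hc, reduceCons_cons_self]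
    exact cancel_iff.2 ⟨(insert_iff.1 hs).1, ht.tail⟩

theorem reduceCons_of_forall_not_rel {y : α} (hy : ∀ z, ¬ R y z) {s : List α}
    (h : s.head? ≠ some y) : reduceCons R y s = y :: s := by
  cases s with
  | nil => rfl
  | cons z s =>
    have hyz : y ≠ z := fun hyz => h (by simp [hyz])
    simp [reduceCons, hyz, hy]

theorem IsNormal.head?_reduceCons_ne {s : List α} (hs : IsNormal R s) {x y : α} (hxy : R x y)
    (hne : x ≠ y) (h : s.head? ≠ some y) : (reduceCons R x s).head? ≠ some y := by
  cases s with
  | nil => simpa [reduceCons] using hne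
  | cons z s =>
    rw [reduceCons]
    split_ifs with hxz
    · exact fun hy => ((List.isChain_cons.1 hs).1 y hy).2 (hxz ▸ hxy)
    · exact h
    · simpa using hne

theorem IsNormal.reduceCons_comm (hR : ∀ x y z, R x y → ¬ R y z) {s : List α}
    (hs : IsNormal R s) {x y : α} (hxy : R x y) :
    reduceCons R x (reduceCons R y s) = reduceCons R y (reduceCons R x s) := by
  have hx : ¬ R x x := not_rel_self hR x
  have hy : ∀ z, ¬ R y z := fun z => hR x y z hxy
  by_cases h : s.head? = some y
  · obtain ⟨t, rfl⟩ := List.head?_eq_some_iff.1 h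
    rw [reduceCons_cons_self, reduceCons_cons_of_rel hx hxy, reduceCons_cons_self]
  · have hne : x ≠ y := fun he => hy y (he ▸ hxy)
    rw [reduceCons_of_forall_not_rel hy h, reduceCons_cons_of_rel hx hxy,
      reduceCons_of_forall_not_rel hy (hs.head?_reduceCons_ne hxy hne h)]

/-- The permutation of the normal words given by left multiplication by a letter. -/
def reduceConsPerm (hR : ∀ x y z, R x y → ¬ R y z) (x : α) :
    Equiv.Perm {s : List α // IsNormal R s} :=
  Function.Involutive.toPerm (fun s => ⟨reduceCons R x s, isNormal_reduceCons hR s.2 x⟩)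
    fun s => Subtype.ext (IsNormal.reduceCons_reduceCons s.2 (not_rel_self hR x))

theorem IsNormal.foldr_reduceCons_nil {s : List α} (hs : IsNormal R s) :
    s.foldr (reduceCons R) [] = s := by
  induction s with
  | nil => rfl
  | cons x s ih => rw [List.foldr_cons, ih hs.tail, reduceCons_of_isNormal hs]

theorem reduceCons_subperm (x : α) (s : List α) : (reduceCons R x s).Subperm (x :: s) := by
  induction s with
  | nil => exact List.Subperm.refl _
  | cons y s ih =>
    rw [reduceCons]
    split_ifs
    · exact ((List.sublist_cons_self y s).trans (List.sublist_cons_self x _)).subperm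
    · exact ((List.subperm_cons y).2 ih).trans (List.Perm.swap x y s).subperm
    · exact List.Subperm.refl _

theorem foldr_reduceCons_subperm (v s : List α) :
    (v.foldr (reduceCons R) s).Subperm (v ++ s) := by
  induction v with
  | nil => exact List.Subperm.refl _
  | cons x v ih => exact (reduceCons_subperm x _).trans ((List.subperm_cons x).2 ih)

variable {M : Type*} [Monoid M] {f : α → M}

theorem prod_map_reduceCons (hsq : ∀ x, f x * f x = 1)
    (hcomm : ∀ x y, R x y → Commute (f x) (f y)) (x : α) (s : List α) :
    ((reduceCons R x s).map f).prod = f x * (s.map f).prod := by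
  induction s with
  | nil => simp [reduceCons]
  | cons y s ih =>
    rw [reduceCons]
    split_ifs with hxy hr
    · rw [hxy, List.map_cons, List.prod_cons, ← mul_assoc, hsq, one_mul]
    · rw [List.map_cons, List.prod_cons, ih, List.map_cons, List.prod_cons,
        (hcomm x y hr).left_comm]
    · rw [List.map_cons, List.prod_cons]

theorem prod_map_foldr_reduceCons (hsq : ∀ x, f x * f x = 1)
    (hcomm : ∀ x y, R x y → Commute (f x) (f y)) (v s : List α) :
    ((v.foldr (reduceCons R) s).map f).prod = (v.map f).prod * (s.map f).prod := by
  induction v with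
  | nil => simp
  | cons x v ih =>
    rw [List.foldr_cons, prod_map_reduceCons hsq hcomm, ih, List.map_cons, List.prod_cons,
      mul_assoc]

end Reduction

section Hex

/-- `x` is an A-letter and `y` a B-letter that commutes with it by a relator. -/
def SlidesPast (x y : HexGen) : Prop := x.1 = false ∧ y.1 = true ∧ x.2 ≠ y.2

instance : DecidableRel SlidesPast := fun x y => inferInstanceAs (Decidable (_ ∧ _ ∧ x.2 ≠ y.2))

theorem SlidesPast.not_slidesPast (x y z : HexGen) (h : SlidesPast x y) : ¬ SlidesPast y z :=
  fun h' => Bool.false_ne_true (h'.1.symm.trans h.2.1)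

theorem hexGen_mul_self (x : HexGen) : (PresentedGroup.of x * PresentedGroup.of x : Hex) = 1 :=
  PresentedGroup.one_of_mem (rels := hexRels) (Or.inl ⟨x, rfl⟩)

theorem SlidesPast.commute (x y : HexGen) (h : SlidesPast x y) :
    Commute (PresentedGroup.of x : Hex) (PresentedGroup.of y) := by
  obtain ⟨i, k⟩ := x
  obtain ⟨j, l⟩ := y
  obtain ⟨rfl, rfl, hkl⟩ := h
  exact commutatorElement_eq_one_iff_commute.1
    (PresentedGroup.one_of_mem (rels := hexRels) (Or.inr ⟨k, l, hkl, rfl⟩))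

theorem evalWord_cons (x : HexGen) (w : List HexGen) :
    evalWord (x :: w) = PresentedGroup.of x * evalWord w := by
  simp [evalWord]

theorem evalWord_append (v w : List HexGen) : evalWord (v ++ w) = evalWord v * evalWord w := by
  simp [evalWord]

theorem evalWord_reverse (w : List HexGen) : evalWord w.reverse = (evalWord w)⁻¹ := by
  induction w with
  | nil => simp [evalWord]
  | cons x w ih =>
    rw [List.reverse_cons, evalWord_append, ih, evalWord_cons x w, mul_inv_rev,
      ← eq_inv_of_mul_eq_one_left (hexGen_mul_self x)]
    simp [evalWord]

theorem lift_reduceConsPerm_eq_one (r : FreeGroup HexGen) (hr : r ∈ hexRels) :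
    FreeGroup.lift (reduceConsPerm SlidesPast.not_slidesPast) r = 1 := by
  rcases hr with ⟨x, rfl⟩ | ⟨k, l, hkl, rfl⟩
  · rw [map_mul, FreeGroup.lift_apply_of]
    exact Equiv.ext fun s =>
      Subtype.ext (IsNormal.reduceCons_reduceCons s.2 (not_rel_self SlidesPast.not_slidesPast x))
  · simp only [map_mul, map_inv, FreeGroup.lift_apply_of]
    refine commutatorElement_eq_one_iff_mul_comm.2 (Equiv.ext fun s => Subtype.ext ?_)
    exact IsNormal.reduceCons_comm SlidesPast.not_slidesPast s.2 ⟨rfl, rfl, hkl⟩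

/-- The action of the group on normal words by left multiplication. -/
def hexAction : Hex →* Equiv.Perm {s : List HexGen // IsNormal SlidesPast s} :=
  PresentedGroup.toGroup lift_reduceConsPerm_eq_one

theorem hexAction_evalWord_apply (v : List HexGen)
    (s : {s : List HexGen // IsNormal SlidesPast s}) :
    (hexAction (evalWord v) s : List HexGen) = v.foldr (reduceCons SlidesPast) s := by
  induction v with
  | nil => simp [evalWord]
  | cons x v ih =>
    rw [evalWord_cons, map_mul, Equiv.Perm.mul_apply, List.foldr_cons, ← ih, hexAction,
      PresentedGroup.toGroup.of]
    rfl

theorem foldr_reduceCons_congr {v w s : List HexGen} (h : evalWord v = evalWord w)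
    (hs : IsNormal SlidesPast s) :
    v.foldr (reduceCons SlidesPast) s = w.foldr (reduceCons SlidesPast) s := by
  rw [← hexAction_evalWord_apply v ⟨s, hs⟩, h, hexAction_evalWord_apply]

theorem foldr_reduceCons_eq_of_evalWord_mul_eq {v s t : List HexGen} (hs : IsNormal SlidesPast s)
    (ht : IsNormal SlidesPast t) (h : evalWord v * evalWord s = evalWord t) :
    v.foldr (reduceCons SlidesPast) s = t := by
  rw [← evalWord_append] at h
  have := foldr_reduceCons_congr h List.isChain_nil
  rwa [List.foldr_append, hs.foldr_reduceCons_nil, ht.foldr_reduceCons_nil] at this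

theorem IsGeodesicWord.subperm {g : Hex} {v w : List HexGen} (hv : IsGeodesicWord g v)
    (hw : evalWord w = g) : v.Subperm w := by
  set s := v.foldr (reduceCons SlidesPast) [] with hs
  have eval_s : evalWord s = g := by
    rw [hs, evalWord, prod_map_foldr_reduceCons hexGen_mul_self SlidesPast.commute, ← hv.1]
    simp [evalWord]
  have v_perm : s.Perm v := by
    have := foldr_reduceCons_subperm (R := SlidesPast) v []
    rw [List.append_nil] at this
    exact this.perm_of_length_le (hv.2 s eval_s)
  have s_subperm : s.Subperm w := by
    rw [hs, foldr_reduceCons_congr (hv.1.trans hw.symm) List.isChain_nil]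
    simpa using foldr_reduceCons_subperm (R := SlidesPast) w []
  exact v_perm.symm.subperm.trans s_subperm

theorem IsGeodesicWord.isChain_ne {g : Hex} {w : List HexGen} (hw : IsGeodesicWord g w) :
    w.IsChain (· ≠ ·) := by
  rw [List.isChain_iff_forall_rel_of_append_cons_cons]
  rintro x _ l₁ l₂ rfl rfl
  have shorter := hw.2 (l₁ ++ l₂) (by
    rw [← hw.1, evalWord_append, evalWord_append, evalWord_cons, evalWord_cons,
      ← mul_assoc (PresentedGroup.of x), hexGen_mul_self, one_mul])
  simp at shorter

theorem IsALeft.isChain_not_slidesPast {w : List HexGen} (hw : IsALeft w) :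
    w.IsChain fun y x => ¬ SlidesPast x y := by
  rw [List.isChain_iff_forall_rel_of_append_cons_cons]
  rintro ⟨i, l⟩ ⟨j, k⟩ l₁ l₂ rfl ⟨rfl, rfl, hkl⟩
  exact hw l₁.length k l hkl (by simp)

theorem IsGeodesicWord.isNormal_reverse {g : Hex} {w : List HexGen} (hw : IsGeodesicWord g w)
    (hl : IsALeft w) : IsNormal SlidesPast w.reverse := by
  rw [IsNormal, List.isChain_reverse]
  have ne := hw.isChain_ne
  have not_slides := hl.isChain_not_slidesPast
  rw [List.isChain_iff_getElem] at ne not_slides ⊢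
  exact fun i hi => ⟨(ne i hi).symm, not_slides i hi⟩

end Hex

section SentenceTree

variable {A : Type*} [DecidableEq A]

theorem lcpLen_comm (u v : List A) : lcpLen u v = lcpLen v u := by
  induction u generalizing v with
  | nil => cases v <;> rfl
  | cons a u ih => cases v <;> grind [lcpLen]

theorem lcpLen_le_length_left (u v : List A) : lcpLen u v ≤ u.length := by
  fun_induction lcpLen u v with grind

theorem lcpLen_add_lcpLen_le (u v w : List A) :
    lcpLen u v + lcpLen v w ≤ v.length + lcpLen u w := by
  induction v generalizing u w with
  | nil => cases u <;> simp [lcpLen]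
  | cons b v ih => cases u <;> cases w <;> grind [lcpLen, lcpLen_le_length_left, lcpLen_comm]

theorem treeDist_comm (u v : List A) : treeDist u v = treeDist v u := by
  rw [treeDist, treeDist, lcpLen_comm, add_comm]

theorem treeDist_triangle (u v w : List A) : treeDist u w ≤ treeDist u v + treeDist v w := by
  have h := lcpLen_add_lcpLen_le u v w
  have hu := lcpLen_le_length_left u v
  have hw := lcpLen_le_length_left w v
  have hv := lcpLen_le_length_left v
  grind [treeDist, lcpLen_comm]

theorem treeDist_append_left (u v : List A) : treeDist u (u ++ v) = v.length := by
  have h : lcpLen u (u ++ v) = u.length := by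
    induction u with
    | nil => rfl
    | cons a u ih => simp [lcpLen, ih]
  rw [treeDist, h, List.length_append]
  omega

theorem exists_eq_append_treeDist (u v : List A) :
    ∃ p x y, u = p ++ x ∧ v = p ++ y ∧ treeDist u v = x.length + y.length := by
  induction u generalizing v with
  | nil => exact ⟨[], [], v, rfl, rfl, by simp [treeDist, lcpLen]⟩
  | cons a u ih =>
    cases v with
    | nil => exact ⟨[], a :: u, [], rfl, rfl, by simp [treeDist, lcpLen]⟩
    | cons b v =>
      by_cases hab : a = b
      · obtain ⟨p, x, y, rfl, rfl, hdist⟩ := ih v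
        refine ⟨a :: p, x, y, rfl, by rw [hab, List.cons_append], ?_⟩
        rw [← hdist]
        grind [treeDist, lcpLen]
      · exact ⟨[], a :: u, b :: v, rfl, rfl, by simp [treeDist, lcpLen, hab]⟩

variable {p : Bool}

theorem length_cutAux (cur w : List HexGen) :
    (cutAux p cur w).length = w.countP (·.1 == p) := by
  induction w generalizing cur with
  | nil => rfl
  | cons x w ih => grind [cutAux]

theorem cutAux_prefix_cutAux_append (cur w v : List HexGen) :
    cutAux p cur w <+: cutAux p cur (w ++ v) := by
  induction w generalizing cur with
  | nil => exact List.nil_prefix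
  | cons x w ih =>
    rw [List.cons_append, cutAux, cutAux]
    split_ifs
    · exact (List.prefix_cons_inj _).2 (ih [])
    · exact ih _

theorem cutAux_append_of_forall_ne (cur w : List HexGen) {v : List HexGen}
    (hv : ∀ x ∈ v, x.1 ≠ p) : cutAux p cur (w ++ v) = cutAux p cur w := by
  refine ((cutAux_prefix_cutAux_append cur w v).eq_of_length ?_).symm
  have hcount : v.countP (·.1 == p) = 0 := by simpa [List.countP_eq_zero] using hv
  rw [length_cutAux, length_cutAux, List.countP_append, hcount, add_zero]

theorem treeDist_cutAux_append (cur w v : List HexGen) :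
    treeDist (cutAux p cur w) (cutAux p cur (w ++ v)) = v.countP (·.1 == p) := by
  obtain ⟨t, ht⟩ := cutAux_prefix_cutAux_append (p := p) cur w v
  have := congrArg List.length ht
  rw [List.length_append, length_cutAux, length_cutAux, List.countP_append] at this
  rw [← ht, treeDist_append_left, Nat.add_left_cancel this]

theorem exists_flatten_append_of_cutAux_eq_append {cur w : List HexGen} {P X : List (List HexGen)}
    (hcur : ∀ x ∈ cur, x.1 ≠ p) (h : cutAux p cur w = P ++ X) :
    ∃ t, cur ++ w = P.flatten ++ t ∧ t.countP (·.1 == p) = X.length := by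
  induction w generalizing cur P with
  | nil =>
    obtain ⟨rfl, rfl⟩ := List.append_eq_nil_iff.1 h.symm
    exact ⟨cur, by simp, by simpa [List.countP_eq_zero] using hcur⟩
  | cons x w ih =>
    rw [cutAux] at h
    split_ifs at h with hx
    · cases P with
      | nil =>
        refine ⟨cur ++ x :: w, by simp, ?_⟩
        have hcount : cur.countP (·.1 == p) = 0 := by simpa [List.countP_eq_zero] using hcur
        rw [← List.nil_append X, ← h]
        simp [hcount, hx, length_cutAux]
      | cons b P =>
        obtain ⟨rfl, htail⟩ := List.cons.inj h
        obtain ⟨t, hw, ht⟩ := ih (cur := []) (by simp) htail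
        exact ⟨t, by simpa using hw, ht⟩
    · obtain ⟨t, hw, ht⟩ := ih (by simpa [or_imp, forall_and, hx] using hcur) h
      exact ⟨t, by simpa using hw, ht⟩

theorem exists_evalWord_eq_inv_mul_and_countP_eq_treeDist (p : Bool) (w w' : List HexGen) :
    ∃ u, evalWord u = (evalWord w)⁻¹ * evalWord w' ∧
      u.countP (·.1 == p) = treeDist (cutAux p [] w) (cutAux p [] w') := by
  obtain ⟨P, X, Y, hX, hY, hdist⟩ := exists_eq_append_treeDist (cutAux p [] w) (cutAux p [] w')
  obtain ⟨t, rfl, ht⟩ := exists_flatten_append_of_cutAux_eq_append (cur := []) (by simp) hX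
  obtain ⟨t', rfl, ht'⟩ := exists_flatten_append_of_cutAux_eq_append (cur := []) (by simp) hY
  refine ⟨t.reverse ++ t', ?_, ?_⟩
  · rw [evalWord_append, evalWord_reverse, evalWord_append, evalWord_append]
    group
  · rw [List.countP_append, List.countP_reverse, ht, ht', hdist]

theorem treeDist_cutAux_reverse_reduceCons_le (x : HexGen) (s : List HexGen) :
    treeDist (cutAux false [] (reduceCons SlidesPast x s).reverse) (cutAux false [] s.reverse)
      ≤ [x].countP (·.1 == false) := by
  have append_dist (t : List HexGen) (y : HexGen) := treeDist_cutAux_append (p := false) [] t [y]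
  induction s with
  | nil => exact (treeDist_comm _ _).trans_le (append_dist [] x).le
  | cons y s ih =>
    rw [reduceCons]
    split_ifs with hxy hslides
    · rw [hxy, List.reverse_cons]
      exact (append_dist s.reverse y).le
    · have cut_append (t : List HexGen) :
          cutAux false [] (y :: t).reverse = cutAux false [] t.reverse := by
        rw [List.reverse_cons]
        exact cutAux_append_of_forall_ne [] t.reverse (by simp [hslides.2.1])
      rwa [cut_append, cut_append]
    · rw [List.reverse_cons (a := x), treeDist_comm]
      exact (append_dist (y :: s).reverse x).le

theorem treeDist_cutAux_reverse_foldr_reduceCons_le (v s : List HexGen) :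
    treeDist (cutAux false [] (v.foldr (reduceCons SlidesPast) s).reverse)
      (cutAux false [] s.reverse) ≤ v.countP (·.1 == false) := by
  induction v with
  | nil => simpa using (treeDist_append_left (cutAux false [] s.reverse) []).le
  | cons x v ih =>
    rw [List.foldr_cons, ← List.singleton_append, List.countP_append]
    exact (treeDist_triangle _ _ _).trans
      (add_le_add (treeDist_cutAux_reverse_reduceCons_le x _) ih)

end SentenceTree

/-- for a-left representations wa, wa' of g, g', the A-letters past the
divergence point of the two representations are exactly the A-letters surviving in a
reduced word for g⁻¹g': the number of A-letters in any geodesic representative v of g⁻¹g'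
equals m + n, the sentence-tree distance between the cut sentences. -/
theorem stmt_16 (g g' : Hex) (wa wa' : List HexGen)
    (hga : IsGeodesicWord g wa) (hal : IsALeft wa)
    (hga' : IsGeodesicWord g' wa') (hal' : IsALeft wa')
    (v : List HexGen) (hv : IsGeodesicWord (g⁻¹ * g') v) :
    (v.filter (fun x => !x.1)).length
      = treeDist (cutAux false [] wa) (cutAux false [] wa') := by
  have hs := hga.isNormal_reverse hal
  have hs' := hga'.isNormal_reverse hal'
  have hfold : v.foldr (reduceCons SlidesPast) wa'.reverse = wa.reverse :=
    foldr_reduceCons_eq_of_evalWord_mul_eq hs' hs (by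
      rw [hv.1, evalWord_reverse, evalWord_reverse, hga.1, hga'.1, mul_inv_cancel_right])
  have hcount : (v.filter (fun x => !x.1)).length = v.countP (·.1 == false) := by
    simp [List.countP_eq_length_filter]
  rw [hcount]
  apply le_antisymm
  · obtain ⟨u, hu, hu_count⟩ :=
      exists_evalWord_eq_inv_mul_and_countP_eq_treeDist false wa wa'
    rw [hga.1, hga'.1] at hu
    exact hu_count ▸ (hv.subperm hu).countP_le _
  · simpa [hfold] using treeDist_cutAux_reverse_foldr_reduceCons_le v wa'.reverse
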